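/- arXiv:2605.09471 — 3 statements merged into one kernel-verified Lean document; each statement's English description precedes it below -/
import Mathlib

section
/- Risk of selecting among fixed candidate vectors by a noisy validation point. Let β₁,…,β_M ∈ ℝ^d be fixed vectors, θ₀ ∈ ℝ^d, and let θ̃₀^(1) satisfy, for all t > 0 and all a ∈ ℝ^d, P( aᵀ(θ̃₀^(1) − θ₀) > t ) ≤ C_τ·exp( −n₀ t² / (4τ²‖a‖₂²) ). Define ĵ := argmin_{j=1,…,M} ‖β_j − θ̃₀^(1)‖₂². Then there exists a constant C > 0 (depending only on C_τ) such that E‖β_ĵ − θ₀‖₂² ≤ 2·min_{j=1,…,M} ‖β_j − θ₀‖₂² + 4C²τ²·( min(log M, d) + 1 ) / n₀. -/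
open MeasureTheory ProbabilityTheory Real
open scoped ENNReal RealInnerProductSpace

noncomputable section

abbrev Euc (d : ℕ) := EuclideanSpace ℝ (Fin d)

/-- A function with an exponential tail, measured by the outer measure, has a measurable majorant
with an explicitly bounded integral. -/
lemma exists_measurable_majorant_of_exp_tail {Ω : Type*} [MeasurableSpace Ω] (P : Measure Ω)
    [IsProbabilityMeasure P] (f : Ω → ℝ) {K : ℝ} (hK : 0 ≤ K)
    (hf : ∀ t : ℝ, 0 < t → P {ω | t < f ω} ≤ ENNReal.ofReal (K * Real.exp (-t))) :
    ∃ g : Ω → ℝ≥0∞, Measurable g ∧ (∀ ω, ENNReal.ofReal (f ω) ≤ g ω) ∧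
      ∫⁻ ω, g ω ∂P ≤ ENNReal.ofReal (1 + K) := by
  set A : ℕ → Set Ω := fun k => toMeasurable P {ω | (k : ℝ) + 1 < f ω} with hA
  have hAm : ∀ k, MeasurableSet (A k) := fun k => measurableSet_toMeasurable _ _
  have hm : ∀ k, Measurable ((A k).indicator (1 : Ω → ℝ≥0∞)) :=
    fun k => measurable_one.indicator (hAm k)
  refine ⟨fun ω => 1 + ∑' k, (A k).indicator 1 ω,
    measurable_const.add (Measurable.tsum hm), fun ω => ?_, ?_⟩
  · obtain h | h := le_or_gt (f ω) 1
    · calc ENNReal.ofReal (f ω) ≤ 1 := by simpa using h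
        _ ≤ _ := le_self_add
    · have hc : 1 < ⌈f ω⌉₊ := by rw [Nat.lt_ceil]; simpa using h
      have hsum : ((⌈f ω⌉₊ - 1 : ℕ) : ℝ≥0∞) ≤ ∑' k, (A k).indicator (1 : Ω → ℝ≥0∞) ω := by
        refine le_trans (le_of_eq ?_) (ENNReal.sum_le_tsum (Finset.range (⌈f ω⌉₊ - 1)))
        rw [Finset.sum_congr rfl (g := fun _ => (1 : ℝ≥0∞))]
        · simp
        · intro k hk
          have hk' : k + 1 < ⌈f ω⌉₊ := by
            have := Finset.mem_range.1 hk
            omega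
          rw [Nat.lt_ceil] at hk'
          have : ω ∈ A k := subset_toMeasurable _ _ (by simpa using hk')
          simp [this]
      calc ENNReal.ofReal (f ω) ≤ ENNReal.ofReal (⌈f ω⌉₊ : ℝ) :=
            ENNReal.ofReal_le_ofReal (Nat.le_ceil _)
        _ = ((1 + (⌈f ω⌉₊ - 1) : ℕ) : ℝ≥0∞) := by
            rw [ENNReal.ofReal_natCast]; congr 1; omega
        _ ≤ _ := by
            push_cast [Nat.cast_add]
            refine add_le_add le_rfl ?_
            exact_mod_cast hsum
  · have hexp : Real.exp (-1) ≤ 1 / 2 := by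
      rw [Real.exp_neg, ← one_div]
      exact one_div_le_one_div_of_le (by norm_num) (by linarith [Real.add_one_le_exp (1 : ℝ)])
    have hterm : ∀ k : ℕ, P (A k) ≤ ENNReal.ofReal (K * (1 / 2 / 2 ^ k)) := by
      intro k
      rw [hA, measure_toMeasurable]
      refine (hf _ (by positivity)).trans (ENNReal.ofReal_le_ofReal ?_)
      refine mul_le_mul_of_nonneg_left ?_ hK
      calc Real.exp (-((k : ℝ) + 1)) = Real.exp (-1) ^ (k + 1) := by
            rw [← Real.exp_nat_mul]; push_cast; ring_nf
        _ ≤ (1 / 2) ^ (k + 1) := pow_le_pow_left₀ (Real.exp_pos _).le hexp _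
        _ = 1 / 2 / 2 ^ k := by rw [pow_succ, one_div_pow]; ring
    have hsum : HasSum (fun k : ℕ => K * (1 / 2 / 2 ^ k)) (K * 1) :=
      (hasSum_geometric_two' 1).mul_left K
    rw [lintegral_add_left measurable_const, lintegral_tsum fun k => (hm k).aemeasurable,
      ENNReal.ofReal_add zero_le_one hK]
    refine add_le_add (by simp) ?_
    calc ∑' k, ∫⁻ ω, (A k).indicator 1 ω ∂P = ∑' k, P (A k) := by
          simp_rw [lintegral_indicator_one (hAm _)]
      _ ≤ ∑' k : ℕ, ENNReal.ofReal (K * (1 / 2 / 2 ^ k)) := ENNReal.tsum_le_tsum hterm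
      _ = ENNReal.ofReal K := by
          rw [← ENNReal.ofReal_tsum_of_nonneg (fun k => by positivity) hsum.summable,
            hsum.tsum_eq, mul_one]

/-- If `b` is at least as close to `z` as `b'` is, then the excess of the squared distance of `b`
to `θ` over that of `b'` is controlled by the noise `z - θ` in the direction `b - b'`. -/
lemma norm_sub_sq_le_of_norm_sub_le {E : Type*} [NormedAddCommGroup E] [InnerProductSpace ℝ E]
    {b b' z θ : E} (h : ‖b - z‖ ≤ ‖b' - z‖) :
    ‖b - θ‖ ^ 2 ≤ ‖b' - θ‖ ^ 2 + 2 * ⟪b - b', z - θ⟫ := by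
  have h1 : ‖b - z‖ ^ 2 = ‖b - θ‖ ^ 2 - 2 * ⟪b - θ, z - θ⟫ + ‖z - θ‖ ^ 2 := by
    rw [← norm_sub_sq_real]; congr 2; abel
  have h2 : ‖b' - z‖ ^ 2 = ‖b' - θ‖ ^ 2 - 2 * ⟪b' - θ, z - θ⟫ + ‖z - θ‖ ^ 2 := by
    rw [← norm_sub_sq_real]; congr 2; abel
  have h3 : (⟪b - b', z - θ⟫ : ℝ) = ⟪b - θ, z - θ⟫ - ⟪b' - θ, z - θ⟫ := by
    rw [← inner_sub_left]; congr 1; abel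
  have h4 : ‖b - z‖ ^ 2 ≤ ‖b' - z‖ ^ 2 := pow_le_pow_left₀ (norm_nonneg _) h 2
  linarith

lemma norm_sub_sub_norm_sub_le {E : Type*} [NormedAddCommGroup E] [InnerProductSpace ℝ E]
    {b b' z θ : E} (h : ‖b - z‖ ≤ ‖b' - z‖) :
    ‖b - θ‖ - ‖b' - θ‖ ≤ 2 * ‖z - θ‖ := by
  have h1 : ‖b - θ‖ ≤ ‖b - z‖ + ‖z - θ‖ := norm_sub_le_norm_sub_add_norm_sub _ _ _
  have h2 : ‖b' - z‖ ≤ ‖b' - θ‖ + ‖θ - z‖ := norm_sub_le_norm_sub_add_norm_sub _ _ _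
  rw [norm_sub_rev θ z] at h2
  linarith

lemma mul_norm_lt_inner_of_norm_sub_le {E : Type*} [NormedAddCommGroup E]
    [InnerProductSpace ℝ E] {b b' z θ : E} (h : ‖b - z‖ ≤ ‖b' - z‖) {t : ℝ} (ht : 0 < t)
    (hlt : t < (‖b - θ‖ - ‖b' - θ‖) / 2) :
    b - b' ≠ 0 ∧ t * ‖b - b'‖ < ⟪b - b', z - θ⟫ := by
  refine ⟨fun h0 => ?_, ?_⟩
  · rw [sub_eq_zero.1 h0] at hlt
    simp only [sub_self, zero_div] at hlt
    linarith
  · have h1 := norm_sub_sq_le_of_norm_sub_le (θ := θ) h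
    have h2 : ‖b - b'‖ ≤ ‖b - θ‖ + ‖θ - b'‖ := norm_sub_le_norm_sub_add_norm_sub _ _ _
    rw [norm_sub_rev θ b'] at h2
    have h3 : 0 < ‖b - θ‖ + ‖b' - θ‖ := by linarith [norm_nonneg (b' - θ)]
    have h4 := mul_lt_mul_of_pos_right hlt h3
    have h5 := mul_le_mul_of_nonneg_left h2 ht.le
    nlinarith

/-- The direction-normalised form of the sub-Gaussian tail bound. -/
lemma measure_mul_norm_lt_inner_le {Ω E : Type*} [MeasurableSpace Ω] [NormedAddCommGroup E]
    [InnerProductSpace ℝ E] {P : Measure Ω} {ξ : Ω → E} {K n τ : ℝ}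
    (htail : ∀ a : E, ∀ t : ℝ, 0 < t → P {ω | t < ⟪a, ξ ω⟫} ≤
      ENNReal.ofReal (K * Real.exp (-n * t ^ 2 / (4 * τ ^ 2 * ‖a‖ ^ 2))))
    {a : E} (ha : a ≠ 0) {t : ℝ} (ht : 0 < t) :
    P {ω | t * ‖a‖ < ⟪a, ξ ω⟫} ≤
      ENNReal.ofReal (K * Real.exp (-(n / (4 * τ ^ 2) * t ^ 2))) := by
  have ha' : 0 < ‖a‖ := norm_pos_iff.2 ha
  convert htail a (t * ‖a‖) (by positivity) using 4
  rw [mul_pow, ← mul_assoc, mul_div_mul_right _ _ (by positivity)]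
  ring

/-- Dimension-dependent majorant of the squared noise. -/
lemma exists_majorant_norm_sq {Ω : Type*} [MeasurableSpace Ω] {P : Measure Ω}
    [IsProbabilityMeasure P] {d : ℕ} {ξ : Ω → Euc d} {K s : ℝ} (hK : 0 ≤ K) (hs : 0 < s)
    (htail : ∀ a : Euc d, a ≠ 0 → ∀ t : ℝ, 0 < t → P {ω | t * ‖a‖ < ⟪a, ξ ω⟫} ≤
      ENNReal.ofReal (K * Real.exp (-(s * t ^ 2)))) :
    ∃ g : Ω → ℝ≥0∞, Measurable g ∧ (∀ ω, ENNReal.ofReal (s * ‖ξ ω‖ ^ 2) ≤ g ω) ∧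
      ∫⁻ ω, g ω ∂P ≤ ENNReal.ofReal (d * (1 + 2 * K)) := by
  have hcoord : ∀ i : Fin d, ∃ g : Ω → ℝ≥0∞, Measurable g ∧
      (∀ ω, ENNReal.ofReal (s * ξ ω i ^ 2) ≤ g ω) ∧
      ∫⁻ ω, g ω ∂P ≤ ENNReal.ofReal (1 + 2 * K) := by
    intro i
    refine exists_measurable_majorant_of_exp_tail P _ (by positivity) fun t ht => ?_
    set r := √(t / s) with hr
    have hr0 : 0 < r := Real.sqrt_pos.2 (by positivity)
    have hr2 : s * r ^ 2 = t := by
      rw [hr, Real.sq_sqrt (by positivity)]; field_simp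
    set e : Euc d := EuclideanSpace.single i (1 : ℝ) with he
    have hen : ‖e‖ = 1 := by simp [he]
    have he0 : e ≠ 0 := by rw [← norm_pos_iff, hen]; exact one_pos
    have hsub : {ω | t < s * ξ ω i ^ 2} ⊆
        {ω | r * ‖e‖ < ⟪e, ξ ω⟫} ∪ {ω | r * ‖-e‖ < ⟪-e, ξ ω⟫} := by
      intro ω hω
      simp only [Set.mem_ofPred_eq] at hω
      have h1 : r ^ 2 < ξ ω i ^ 2 := by
        rw [← hr2] at hω
        exact lt_of_mul_lt_mul_left hω hs.le
      have h2 : r < |ξ ω i| := by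
        rw [← abs_of_pos hr0]; exact sq_lt_sq.1 h1
      have hin : (⟪e, ξ ω⟫ : ℝ) = ξ ω i := by
        rw [he, EuclideanSpace.inner_single_left]; simp
      simpa [hen, inner_neg_left, hin] using lt_abs.1 h2
    calc P {ω | t < s * ξ ω i ^ 2} ≤ _ := measure_mono hsub
      _ ≤ _ := measure_union_le _ _
      _ ≤ _ := add_le_add (htail e he0 r hr0) (htail (-e) (neg_ne_zero.2 he0) r hr0)
      _ = _ := by
        rw [← ENNReal.ofReal_add (by positivity) (by positivity), hr2]
        congr 1; ring
  choose g hgm hg hgi using hcoord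
  refine ⟨fun ω => ∑ i, g i ω, Finset.measurable_sum _ fun i _ => hgm i, fun ω => ?_, ?_⟩
  · rw [EuclideanSpace.real_norm_sq_eq, Finset.mul_sum,
      ENNReal.ofReal_sum_of_nonneg fun i _ => by positivity]
    exact Finset.sum_le_sum fun i _ => hg i ω
  · rw [lintegral_finsetSum _ fun i _ => hgm i]
    refine (Finset.sum_le_sum fun i _ => hgi i).trans (le_of_eq ?_)
    rw [Finset.sum_const, Finset.card_univ, Fintype.card_fin,
      ENNReal.ofReal_mul (Nat.cast_nonneg d), ENNReal.ofReal_natCast, nsmul_eq_mul]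

/-- Majorant of a squared random variable whose tail is controlled by `M` sub-Gaussian events. -/
lemma exists_majorant_sq_of_union_tail {Ω : Type*} [MeasurableSpace Ω] {P : Measure Ω}
    [IsProbabilityMeasure P] {W : Ω → ℝ} (hW : ∀ ω, 0 ≤ W ω) {M : ℕ} (hM : 1 ≤ M) {K s : ℝ}
    (hK : 0 ≤ K) (hs : 0 < s)
    (htail : ∀ t : ℝ, 0 < t → P {ω | t < W ω} ≤
      ENNReal.ofReal (M * (K * Real.exp (-(s * t ^ 2))))) :
    ∃ g : Ω → ℝ≥0∞, Measurable g ∧ (∀ ω, ENNReal.ofReal (s * W ω ^ 2) ≤ g ω) ∧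
      ∫⁻ ω, g ω ∂P ≤ ENNReal.ofReal (Real.log M + (1 + K)) := by
  have hM0 : (0 : ℝ) < M := by exact_mod_cast hM
  have hlog : 0 ≤ Real.log M := Real.log_natCast_nonneg M
  obtain ⟨g, hgm, hg, hgi⟩ := exists_measurable_majorant_of_exp_tail P
    (fun ω => s * W ω ^ 2 - Real.log M) hK fun t ht => by
      set r := √((t + Real.log M) / s) with hr
      have hr0 : 0 < r := Real.sqrt_pos.2 (by positivity)
      have hr2 : s * r ^ 2 = t + Real.log M := by
        rw [hr, Real.sq_sqrt (by positivity)]; field_simp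
      refine (measure_mono fun ω hω => ?_).trans ((htail r hr0).trans_eq ?_)
      · simp only [Set.mem_ofPred_eq] at hω ⊢
        refine lt_of_pow_lt_pow_left₀ 2 (hW ω) (lt_of_mul_lt_mul_left ?_ hs.le)
        linarith
      · rw [hr2, neg_add, Real.exp_add, Real.exp_neg (Real.log M), Real.exp_log hM0]
        congr 1
        field_simp
  refine ⟨fun ω => ENNReal.ofReal (Real.log M) + g ω, measurable_const.add hgm, fun ω => ?_, ?_⟩
  · refine le_trans ?_ (add_le_add le_rfl (hg ω))
    refine le_trans (ENNReal.ofReal_le_ofReal ?_) ENNReal.ofReal_add_le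
    linarith
  · rw [lintegral_add_left measurable_const, ENNReal.ofReal_add hlog (by positivity)]
    exact add_le_add (by simp) hgi

/-- **Lemma (Risk of selecting among fixed candidates by a noisy validation point).**
If `ĵ = argmin_j ‖β_j − θ̃₀^{(1)}‖₂²`, then
`E‖β_ĵ − θ₀‖₂² ≤ 2 min_j ‖β_j − θ₀‖₂² + 4C²τ²(min(log M, d) + 1)/n₀`. -/
theorem selection_by_validation :
    ∀ Cτ : ℝ, 0 < Cτ →
    ∃ C : ℝ, 0 < C ∧
    ∀ (Ω : Type) (_ : MeasurableSpace Ω) (P : Measure Ω), IsProbabilityMeasure P →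
    ∀ d M n₀ : ℕ, 1 ≤ d → 1 ≤ M → 1 ≤ n₀ →
    ∀ τ : ℝ, 0 < τ →
    ∀ β : Fin M → Euc d, ∀ θ0 : Euc d, ∀ θval : Ω → Euc d,
    -- sub-Gaussian tail of the validation estimate, for every direction a
    (∀ a : Euc d, ∀ t : ℝ, 0 < t →
      P {ω | t < ⟪a, θval ω - θ0⟫} ≤
        ENNReal.ofReal (Cτ * Real.exp (-(n₀ : ℝ) * t ^ 2 / (4 * τ ^ 2 * ‖a‖ ^ 2)))) →
    -- ĵ picks a minimizer of the validation error
    ∀ jhat : Ω → Fin M, Measurable jhat →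
      (∀ ω, ∀ j : Fin M, ‖β (jhat ω) - θval ω‖ ≤ ‖β j - θval ω‖) →
      (∫⁻ ω, (‖β (jhat ω) - θ0‖₊ : ℝ≥0∞) ^ 2 ∂P) ≤
        ENNReal.ofReal (2 * (⨅ j : Fin M, ‖β j - θ0‖ ^ 2) +
          4 * C ^ 2 * τ ^ 2 * (min (Real.log (M : ℝ)) (d : ℝ) + 1) / (n₀ : ℝ)) := by
  intro Cτ hCτ
  refine ⟨√(8 * (1 + 2 * Cτ)), by positivity, ?_⟩
  intro Ω _ P _ d M n₀ _ hM hn₀ τ hτ β θ0 θval htail jhat _ hjhat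
  have : Nonempty (Fin M) := ⟨⟨0, hM⟩⟩
  obtain ⟨j₀, hj₀⟩ := exists_eq_ciInf_of_finite (f := fun j : Fin M => ‖β j - θ0‖ ^ 2)
  rw [← hj₀, Real.sq_sqrt (by positivity)]
  have hn : (0 : ℝ) < n₀ := by exact_mod_cast hn₀
  set s : ℝ := n₀ / (4 * τ ^ 2) with hs_def
  have hs : 0 < s := by positivity
  have hdir : ∀ a : Euc d, a ≠ 0 → ∀ t : ℝ, 0 < t →
      P {ω | t * ‖a‖ < ⟪a, θval ω - θ0⟫} ≤ ENNReal.ofReal (Cτ * Real.exp (-(s * t ^ 2))) :=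
    fun a ha t ht => measure_mul_norm_lt_inner_le htail ha ht
  set W : Ω → ℝ := fun ω => max ((‖β (jhat ω) - θ0‖ - ‖β j₀ - θ0‖) / 2) 0 with hW_def
  have hW : ∀ ω, 0 ≤ W ω := fun ω => le_max_right _ _
  have hlog : 0 ≤ Real.log M := Real.log_natCast_nonneg M
  have hmin : 0 ≤ min (Real.log (M : ℝ)) (d : ℝ) := le_min hlog (Nat.cast_nonneg d)
  obtain ⟨g, hgm, hg, hgi⟩ : ∃ g : Ω → ℝ≥0∞, Measurable g ∧
      (∀ ω, ENNReal.ofReal (s * W ω ^ 2) ≤ g ω) ∧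
      ∫⁻ ω, g ω ∂P ≤
        ENNReal.ofReal ((1 + 2 * Cτ) * (min (Real.log (M : ℝ)) (d : ℝ) + 1)) := by
    obtain h | h := le_total (Real.log (M : ℝ)) (d : ℝ)
    · obtain ⟨g, hgm, hg, hgi⟩ :=
        exists_majorant_sq_of_union_tail (P := P) hW hM hCτ.le hs fun t ht => by
          have hsub : {ω | t < W ω} ⊆
              ⋃ j : Fin M, {ω | β j - β j₀ ≠ 0 ∧
                t * ‖β j - β j₀‖ < ⟪β j - β j₀, θval ω - θ0⟫} := by
            intro ω hω
            obtain hlt | hlt := lt_max_iff.1 (show t < max _ _ from hω)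
            · exact Set.mem_iUnion.2
                ⟨jhat ω, mul_norm_lt_inner_of_norm_sub_le (hjhat ω j₀) ht hlt⟩
            · exact absurd hlt ht.not_gt
          refine (measure_mono hsub).trans ((measure_iUnion_fintype_le P _).trans ?_)
          refine (Finset.sum_le_sum (g := fun _ =>
            ENNReal.ofReal (Cτ * Real.exp (-(s * t ^ 2)))) fun j _ => ?_).trans_eq ?_
          · by_cases hj : β j - β j₀ = 0
            · simp [hj]
            · exact (measure_mono fun ω hω => hω.2).trans (hdir _ hj t ht)
          · rw [Finset.sum_const, Finset.card_univ, Fintype.card_fin,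
              ENNReal.ofReal_mul (Nat.cast_nonneg M), ENNReal.ofReal_natCast, nsmul_eq_mul]
      refine ⟨g, hgm, hg, hgi.trans (ENNReal.ofReal_le_ofReal ?_)⟩
      rw [min_eq_left h]
      nlinarith
    · obtain ⟨g, hgm, hg, hgi⟩ := exists_majorant_norm_sq hCτ.le hs hdir
      refine ⟨g, hgm, fun ω => le_trans (ENNReal.ofReal_le_ofReal ?_) (hg ω),
        hgi.trans (ENNReal.ofReal_le_ofReal ?_)⟩
      · refine mul_le_mul_of_nonneg_left (pow_le_pow_left₀ (hW ω) ?_ 2) hs.le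
        refine max_le ?_ (norm_nonneg _)
        linarith [norm_sub_sub_norm_sub_le (θ := θ0) (hjhat ω j₀)]
      · rw [min_eq_right h]
        nlinarith
  have hpt : ∀ ω, (‖β (jhat ω) - θ0‖₊ : ℝ≥0∞) ^ 2 ≤
      ENNReal.ofReal (2 * ‖β j₀ - θ0‖ ^ 2) + ENNReal.ofReal (8 / s) * g ω := by
    intro ω
    have h1 : ‖β (jhat ω) - θ0‖ ≤ ‖β j₀ - θ0‖ + 2 * W ω := by
      linarith [le_max_left ((‖β (jhat ω) - θ0‖ - ‖β j₀ - θ0‖) / 2) 0]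
    have h2 : ‖β (jhat ω) - θ0‖ ^ 2 ≤ 2 * ‖β j₀ - θ0‖ ^ 2 + 8 / s * (s * W ω ^ 2) := by
      have h3 : 8 / s * (s * W ω ^ 2) = 8 * W ω ^ 2 := by field_simp
      rw [h3]
      nlinarith [pow_le_pow_left₀ (norm_nonneg _) h1 2, sq_nonneg (‖β j₀ - θ0‖ - 2 * W ω)]
    calc (‖β (jhat ω) - θ0‖₊ : ℝ≥0∞) ^ 2 = ENNReal.ofReal (‖β (jhat ω) - θ0‖ ^ 2) := by
          rw [ENNReal.ofReal_pow (norm_nonneg _), ofReal_norm, enorm_eq_nnnorm]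
      _ ≤ _ := ENNReal.ofReal_le_ofReal h2
      _ ≤ _ := ENNReal.ofReal_add_le
      _ ≤ _ := by
        rw [ENNReal.ofReal_mul (p := 8 / s) (by positivity)]
        gcongr
        exact hg ω
  calc ∫⁻ ω, (‖β (jhat ω) - θ0‖₊ : ℝ≥0∞) ^ 2 ∂P
      ≤ ∫⁻ ω, (ENNReal.ofReal (2 * ‖β j₀ - θ0‖ ^ 2) + ENNReal.ofReal (8 / s) * g ω) ∂P :=
        lintegral_mono hpt
    _ = ENNReal.ofReal (2 * ‖β j₀ - θ0‖ ^ 2) + ENNReal.ofReal (8 / s) * ∫⁻ ω, g ω ∂P := by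
        rw [lintegral_add_left measurable_const, lintegral_const_mul _ hgm]
        simp
    _ ≤ ENNReal.ofReal (2 * ‖β j₀ - θ0‖ ^ 2) + ENNReal.ofReal (8 / s) *
          ENNReal.ofReal ((1 + 2 * Cτ) * (min (Real.log (M : ℝ)) (d : ℝ) + 1)) := by
        gcongr
    _ = _ := by
        rw [← ENNReal.ofReal_mul (by positivity),
          ← ENNReal.ofReal_add (by positivity) (by positivity)]
        congr 2
        rw [hs_def]
        field_simp
end
end

section
/- Oracle index for the max-risk criterion. Let 0 = h₀ ≤ h₁ ≤ ⋯ ≤ h_m and σ₀ ≥ σ₁ ≥ ⋯ ≥ σ_m ≥ 0 be real numbers, with the convention σ_{−1} := +∞. Define r⋆ := max{ 0 ≤ r ≤ m : σ_{r−1} ≥ h_r } and R_r := max( h_r², σ_r² ) for r = 0,…,m. Then R_{r⋆} = min_{0 ≤ r ≤ m} R_r; moreover, R_r is nonincreasing in r for r ≤ r⋆ and nondecreasing in r for r ≥ r⋆. -/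
noncomputable section

/-- The oracle index `r⋆ = max{0 ≤ r ≤ m : σ_{r−1} ≥ h_r}` (the convention
`σ_{−1} = +∞` makes `r = 0` always feasible). -/
def oracleIndex (m : ℕ) (h σ : ℕ → ℝ) : ℕ :=
  sSup {r | r ≤ m ∧ (r = 0 ∨ h r ≤ σ (r - 1))}

/-- **Lemma (Oracle index for the max-risk criterion).** For `0 = h₀ ≤ h₁ ≤ ⋯ ≤ h_m`
nondecreasing and `σ₀ ≥ σ₁ ≥ ⋯ ≥ σ_m ≥ 0` nonincreasing, with
`R_r := max(h_r², σ_r²)`, the oracle index `r⋆` satisfies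
`R_{r⋆} = min_{0 ≤ r ≤ m} R_r`; moreover `R_r` is nonincreasing for `r ≤ r⋆` and
nondecreasing for `r⋆ ≤ r ≤ m`. -/
theorem oracle_index_minimizes
    (m : ℕ) (h σ : ℕ → ℝ)
    (h0 : h 0 = 0)
    (hmono : ∀ r, r < m → h r ≤ h (r + 1))
    (σmono : ∀ r, r < m → σ (r + 1) ≤ σ r)
    (σnonneg : ∀ r, r ≤ m → 0 ≤ σ r) :
    oracleIndex m h σ ≤ m ∧
    (∀ r, r ≤ m →
      max (h (oracleIndex m h σ) ^ 2) (σ (oracleIndex m h σ) ^ 2) ≤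
        max (h r ^ 2) (σ r ^ 2)) ∧
    (∀ r s, r ≤ s → s ≤ oracleIndex m h σ →
      max (h s ^ 2) (σ s ^ 2) ≤ max (h r ^ 2) (σ r ^ 2)) ∧
    (∀ r s, oracleIndex m h σ ≤ r → r ≤ s → s ≤ m →
      max (h r ^ 2) (σ r ^ 2) ≤ max (h s ^ 2) (σ s ^ 2)) := by
  have h_le : ∀ r s, r ≤ s → s ≤ m → h r ≤ h s := by
    intro r s hrs
    induction s, hrs using Nat.le_induction with
    | base => exact fun _ => le_rfl
    | succ n _ ih => exact fun hn => (ih (by omega)).trans (hmono n (by omega))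
  have σ_le : ∀ r s, r ≤ s → s ≤ m → σ s ≤ σ r := by
    intro r s hrs
    induction s, hrs using Nat.le_induction with
    | base => exact fun _ => le_rfl
    | succ n _ ih => exact fun hn => (σmono n (by omega)).trans (ih (by omega))
  have h_nonneg : ∀ r, r ≤ m → 0 ≤ h r := fun r hr => h0 ▸ h_le 0 r r.zero_le hr
  have bdd : BddAbove {r | r ≤ m ∧ (r = 0 ∨ h r ≤ σ (r - 1))} := ⟨m, fun _ hr => hr.1⟩
  obtain ⟨le_m, feasible⟩ : oracleIndex m h σ ∈ {r | r ≤ m ∧ (r = 0 ∨ h r ≤ σ (r - 1))} :=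
    Nat.sSup_mem ⟨0, m.zero_le, Or.inl rfl⟩ bdd
  have maximal : ∀ r, r ≤ m → h r ≤ σ (r - 1) → r ≤ oracleIndex m h σ :=
    fun r hr hfeas => le_csSup bdd ⟨hr, Or.inr hfeas⟩
  generalize oracleIndex m h σ = k at *
  have antitone_below : ∀ r s, r ≤ s → s ≤ k →
      max (h s ^ 2) (σ s ^ 2) ≤ max (h r ^ 2) (σ r ^ 2) := by
    intro r s hrs hsk
    rcases hrs.eq_or_lt with rfl | hlt
    · exact le_rfl
    have hs : h s ≤ σ r :=
      (h_le s k hsk le_m).trans <|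
        (feasible.resolve_left (by omega)).trans (σ_le r (k - 1) (by omega) (by omega))
    exact le_max_of_le_right <| max_le
      (pow_le_pow_left₀ (h_nonneg s (by omega)) hs 2)
      (pow_le_pow_left₀ (σnonneg s (by omega)) (σ_le r s hrs (by omega)) 2)
  have monotone_above : ∀ r s, k ≤ r → r ≤ s → s ≤ m →
      max (h r ^ 2) (σ r ^ 2) ≤ max (h s ^ 2) (σ s ^ 2) := by
    intro r s hkr hrs hsm
    rcases hrs.eq_or_lt with rfl | hlt
    · exact le_rfl
    have hσ : σ r ≤ h (r + 1) := by
      by_contra! hcon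
      have := maximal (r + 1) (by omega) hcon.le
      omega
    exact le_max_of_le_left <| max_le
      (pow_le_pow_left₀ (h_nonneg r (by omega)) (h_le r s hrs hsm) 2)
      (pow_le_pow_left₀ (σnonneg r (by omega)) (hσ.trans (h_le (r + 1) s hlt hsm)) 2)
  refine ⟨le_m, fun r hr => ?_, antitone_below, monotone_above⟩
  rcases le_total r k with hrk | hkr
  · exact antitone_below r k hrk le_rfl
  · exact monotone_above k r le_rfl hkr hr
end
end

section
/- Norm tail bound from uniform one-dimensional sub-Gaussian projections via a 1/2-net. Let X be a random vector in ℝ^d and β > 0 satisfy: for every unit vector a ∈ ℝ^d and every t > 0, P(aᵀX > t) ≤ exp(−t²/β²). Then, with c := 2·√(2·log 5), for every t > c·β·√d, P( ‖X‖₂ > t ) ≤ exp( −t²/(2β²) ). -/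
open MeasureTheory Real
open scoped ENNReal RealInnerProductSpace

noncomputable section

/-- The unit sphere of a finite-dimensional real normed space has a `1/2`-net with at most
`5 ^ finrank` points. -/
theorem exists_half_net_unit_sphere (E : Type*) [NormedAddCommGroup E] [NormedSpace ℝ E]
    [FiniteDimensional ℝ E] :
    ∃ s : Finset E, s.card ≤ 5 ^ Module.finrank ℝ E ∧ (∀ a ∈ s, ‖a‖ = 1) ∧
      ∀ u : E, ‖u‖ = 1 → ∃ a ∈ s, ‖a - u‖ < 1 / 2 := by
  classical
  let IsSep : Finset E → Prop := fun s =>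
    (∀ a ∈ s, ‖a‖ = 1) ∧ ∀ a ∈ s, ∀ b ∈ s, a ≠ b → 1 / 2 ≤ ‖a - b‖
  have norm_two_smul : ∀ x : E, ‖(2 : ℝ) • x‖ = 2 * ‖x‖ := fun x => by
    rw [norm_smul, Real.norm_ofNat]
  have hcard : ∀ s, IsSep s → s.card ≤ 5 ^ Module.finrank ℝ E := by
    intro s ⟨hs, hsep⟩
    have hinj : Function.Injective (fun x : E => (2 : ℝ) • x) :=
      smul_right_injective E two_ne_zero
    rw [← Finset.card_image_of_injective s hinj]
    refine Besicovitch.card_le_of_separated _ ?_ ?_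
    · simp only [Finset.forall_mem_image, norm_two_smul]
      intro a ha
      rw [hs a ha, mul_one]
    · simp only [Finset.forall_mem_image]
      intro a ha b hb hab
      rw [← smul_sub, norm_two_smul]
      have := hsep a ha b hb fun h => hab (h ▸ rfl)
      linarith
  let IsSepCard : ℕ → Prop := fun n => ∃ s, IsSep s ∧ s.card = n
  have hzero : IsSepCard 0 := ⟨∅, by simp [IsSep], rfl⟩
  obtain ⟨s, hs, hsn⟩ : IsSepCard (Nat.findGreatest IsSepCard (5 ^ Module.finrank ℝ E)) :=
    Nat.findGreatest_spec (Nat.zero_le _) hzero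
  refine ⟨s, hcard s hs, hs.1, fun u hu => ?_⟩
  by_contra! hfar
  have hus : u ∉ s := fun h => by
    have := hfar u h
    norm_num at this
  have hins : IsSep (insert u s) := by
    refine ⟨?_, ?_⟩
    · simpa [hu] using hs.1
    · intro a ha b hb hab
      rcases Finset.mem_insert.1 ha with rfl | has <;>
        rcases Finset.mem_insert.1 hb with rfl | hbs
      · exact absurd rfl hab
      · rw [norm_sub_rev]
        exact hfar b hbs
      · exact hfar a has
      · exact hs.2 a has b hbs hab
  have hle := Nat.le_findGreatest (P := IsSepCard) (hcard _ hins) ⟨_, hins, rfl⟩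
  rw [← hsn, Finset.card_insert_of_notMem hus] at hle
  omega

/-- A unit vector within `1/2` of the direction of `x` captures `7/8` of the norm of `x`. -/
theorem seven_eighths_norm_le_inner {E : Type*} [NormedAddCommGroup E] [InnerProductSpace ℝ E]
    {a x : E} (ha : ‖a‖ = 1) (hx : x ≠ 0) (h : ‖a - ‖x‖⁻¹ • x‖ < 1 / 2) :
    7 / 8 * ‖x‖ ≤ ⟪a, x⟫ := by
  have hpos : 0 < ‖x‖ := norm_pos_iff.2 hx
  have hu : ‖‖x‖⁻¹ • x‖ = 1 := norm_smul_inv_norm (𝕜 := ℝ) hx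
  have hsq := norm_sub_sq_real a (‖x‖⁻¹ • x)
  rw [hu, ha] at hsq
  have hlow : 7 / 8 ≤ ⟪a, ‖x‖⁻¹ • x⟫ := by
    nlinarith [norm_nonneg (a - ‖x‖⁻¹ • x)]
  rwa [real_inner_smul_right, inv_mul_eq_div, le_div_iff₀ hpos] at hlow

/-- **Lemma (Norm tail bound from uniform one-dimensional sub-Gaussian projections).**
If `P(aᵀX > t) ≤ exp(−t²/β²)` for every unit vector `a` and every `t > 0`, then with
`c = 2√(2 log 5)`, for every `t > cβ√d`, `P(‖X‖₂ > t) ≤ exp(−t²/(2β²))`. -/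
theorem norm_tail_from_projections
    (d : ℕ) (hd : 1 ≤ d)
    (Ω : Type) (_ : MeasurableSpace Ω) (P : Measure Ω) (hP : IsProbabilityMeasure P)
    (X : Ω → Euc d) (β : ℝ) (hβ : 0 < β)
    (htail : ∀ a : Euc d, ‖a‖ = 1 → ∀ t : ℝ, 0 < t →
      P {ω | t < ⟪a, X ω⟫} ≤ ENNReal.ofReal (Real.exp (-t ^ 2 / β ^ 2))) :
    ∀ t : ℝ, 2 * Real.sqrt (2 * Real.log 5) * β * Real.sqrt (d : ℝ) < t →
      P {ω | t < ‖X ω‖} ≤ ENNReal.ofReal (Real.exp (-t ^ 2 / (2 * β ^ 2))) := by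
  intro t ht
  have hlog : 0 < Real.log 5 := Real.log_pos (by norm_num)
  have ht0 : 0 < t := lt_of_le_of_lt (by positivity) ht
  have htsq : 8 * Real.log 5 * β ^ 2 * d ≤ t ^ 2 := by
    have hsq := pow_le_pow_left₀ (by positivity) ht.le 2
    rw [mul_pow, mul_pow, mul_pow, Real.sq_sqrt (by positivity), Real.sq_sqrt (by positivity)]
      at hsq
    linarith
  obtain ⟨s, hcard, hs, hnet⟩ := exists_half_net_unit_sphere (Euc d)
  rw [finrank_euclideanSpace_fin] at hcard
  have hsub : {ω | t < ‖X ω‖} ⊆ ⋃ a ∈ s, {ω | 7 / 8 * t < ⟪a, X ω⟫} := by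
    intro ω (hω : t < ‖X ω‖)
    have hX : X ω ≠ 0 := norm_pos_iff.1 (ht0.trans hω)
    obtain ⟨a, ha, hau⟩ := hnet (‖X ω‖⁻¹ • X ω) (norm_smul_inv_norm (𝕜 := ℝ) hX)
    have hinner := seven_eighths_norm_le_inner (hs a ha) hX hau
    simp only [Set.mem_iUnion, Set.mem_ofPred_eq]
    exact ⟨a, ha, by linarith⟩
  have hexp : (5 : ℝ) ^ d * Real.exp (-(7 / 8 * t) ^ 2 / β ^ 2)
      ≤ Real.exp (-t ^ 2 / (2 * β ^ 2)) := by
    have hfive : (5 : ℝ) ^ d = Real.exp (d * Real.log 5) := by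
      rw [Real.exp_nat_mul, Real.exp_log (by norm_num)]
    rw [hfive, ← Real.exp_add, Real.exp_le_exp]
    have hdl : d * Real.log 5 ≤ t ^ 2 / (8 * β ^ 2) := by
      rw [le_div_iff₀ (by positivity)]
      linarith
    have hhalf : -t ^ 2 / (2 * β ^ 2) = t ^ 2 / (8 * β ^ 2) - 5 / 8 * (t ^ 2 / β ^ 2) := by
      field_simp
      norm_num
    have hproj : -(7 / 8 * t) ^ 2 / β ^ 2 = -(49 / 64) * (t ^ 2 / β ^ 2) := by ring
    have hnonneg : 0 ≤ t ^ 2 / β ^ 2 := by positivity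
    rw [hhalf, hproj]
    linarith
  calc P {ω | t < ‖X ω‖}
      ≤ P (⋃ a ∈ s, {ω | 7 / 8 * t < ⟪a, X ω⟫}) := measure_mono hsub
    _ ≤ ∑ a ∈ s, P {ω | 7 / 8 * t < ⟪a, X ω⟫} := measure_biUnion_finset_le _ _
    _ ≤ ∑ _a ∈ s, ENNReal.ofReal (Real.exp (-(7 / 8 * t) ^ 2 / β ^ 2)) :=
        Finset.sum_le_sum fun a ha => htail a (hs a ha) _ (by positivity)
    _ = s.card * ENNReal.ofReal (Real.exp (-(7 / 8 * t) ^ 2 / β ^ 2)) := by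
        rw [Finset.sum_const, nsmul_eq_mul]
    _ ≤ ENNReal.ofReal (5 ^ d) * ENNReal.ofReal (Real.exp (-(7 / 8 * t) ^ 2 / β ^ 2)) := by
        gcongr
        rw [← ENNReal.ofReal_natCast]
        exact ENNReal.ofReal_le_ofReal (by exact_mod_cast hcard)
    _ = ENNReal.ofReal (5 ^ d * Real.exp (-(7 / 8 * t) ^ 2 / β ^ 2)) :=
        (ENNReal.ofReal_mul (by positivity)).symm
    _ ≤ ENNReal.ofReal (Real.exp (-t ^ 2 / (2 * β ^ 2))) := ENNReal.ofReal_le_ofReal hexp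
end
end
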